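/- For all x ≥ 2 and Q ≥ 1, ∑_{q ≤ Q} ∑_{a ∈ G_q} (ψ_K(x;q,a) − x/φ_K(q))² ≪ Q·(log Qx)⁴ + ∑_{q ≤ Q} (1/φ(q)) ∑_{χ mod q} |ψ'_K(x, χ*∘N)|², where for each Dirichlet character χ modulo q, χ* denotes the primitive character inducing χ, and the implied constant depends only on K. -/

import Mathlib

/-!
Setting: `K` is a number field, Galois over `ℚ`, with ring of integers `𝓞 K`.
We formalize the objects from Smith, "A generalization of the
Barban-Davenport-Halberstam Theorem to number fields".
-/

open NumberField Ideal
open scoped Classical BigOperators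

noncomputable section

/-- `𝔞` is a (positive) power of a nonzero prime ideal of `𝓞 K`. -/
def IsPrimeIdealPower {K : Type*} [Field K] [NumberField K] (𝔞 : Ideal (𝓞 K)) : Prop :=
  ∃ (𝔭 : Ideal (𝓞 K)) (m : ℕ), 𝔭.IsPrime ∧ 𝔭 ≠ ⊥ ∧ 1 ≤ m ∧ 𝔞 = 𝔭 ^ m

/-- The von Mangoldt function on ideals of `𝓞 K`: `Λ_K(𝔭^m) = log N𝔭`, and `0` otherwise.
(For `𝔞 = 𝔭^m` with `𝔭` prime, the radical of `𝔞` is `𝔭`.) -/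
def LambdaK (K : Type*) [Field K] [NumberField K] (𝔞 : Ideal (𝓞 K)) : ℝ :=
  if IsPrimeIdealPower 𝔞 then Real.log (absNorm 𝔞.radical) else 0

/-- `ψ_K(x; q, a) = ∑_{N𝔭^m ≤ x, N𝔭^m ≡ a (mod q)} log N𝔭`. -/
def psiK (K : Type*) [Field K] [NumberField K] (x : ℝ) (q : ℕ) (a : ZMod q) : ℝ :=
  ∑' 𝔞 : Ideal (𝓞 K),
    if (absNorm 𝔞 : ℝ) ≤ x ∧ ((absNorm 𝔞 : ZMod q) = a) then LambdaK K 𝔞 else 0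

/-- `G_q`: the image of `Gal(K(ζ_q)/K)` in `(ℤ/qℤ)ˣ` under restriction to `ℚ(ζ_q)` followed
by the canonical isomorphism `Gal(ℚ(ζ_q)/ℚ) ≅ (ℤ/qℤ)ˣ`; concretely, the range of the map
sending `σ ∈ Gal(K(ζ_q)/K)` to the exponent `a ∈ (ℤ/qℤ)ˣ` with `σ(ζ_q) = ζ_q^a`. -/
def Gq (K : Type*) [Field K] [NumberField K] (q : ℕ) : Subgroup (ZMod q)ˣ :=
  if h : 0 < q then
    haveI : NeZero q := ⟨h.ne'⟩
    haveI : NeZero (((⟨q, h⟩ : ℕ+) : ℕ) : K) := ⟨Nat.cast_ne_zero.mpr h.ne'⟩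
    ((IsCyclotomicExtension.zeta_spec (⟨q, h⟩ : ℕ+) K
        (CyclotomicField (⟨q, h⟩ : ℕ+) K)).autToPow K).range
  else ⊥

/-- `φ_K(q) = |G_q|`. -/
def phiK (K : Type*) [Field K] [NumberField K] (q : ℕ) : ℕ :=
  Nat.card (Gq K q)

/-- `ψ_K(x, χ∘N) = ∑_{N𝔞 ≤ x} χ(N𝔞) Λ_K(𝔞)`. -/
def psiKChi (K : Type*) [Field K] [NumberField K] (x : ℝ) {q : ℕ}
    (χ : DirichletCharacter ℂ q) : ℂ :=
  ∑' 𝔞 : Ideal (𝓞 K),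
    if (absNorm 𝔞 : ℝ) ≤ x then χ (absNorm 𝔞 : ZMod q) * (LambdaK K 𝔞 : ℂ) else 0

/-- `ψ'_K(x, χ∘N)`: equals `ψ_K(x, χ∘N) − x` when `χ` is trivial on `G_q`,
and `ψ_K(x, χ∘N)` otherwise. -/
def psiKChi' (K : Type*) [Field K] [NumberField K] (x : ℝ) {q : ℕ}
    (χ : DirichletCharacter ℂ q) : ℂ :=
  if ∀ a ∈ Gq K q, χ (a : ZMod q) = 1 then psiKChi K x χ - x else psiKChi K x χ

/-- The common residue degree `f(K/ℚ; p)` of the primes of `K` above `p`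
(well-defined when `K/ℚ` is Galois): any prime `𝔭` above `p` has `N𝔭 = p^f`. -/
def resDeg (K : Type*) [Field K] [NumberField K] (p : ℕ) : ℕ :=
  if h : ∃ 𝔭 : Ideal (𝓞 K), 𝔭.IsPrime ∧ 𝔭 ≠ ⊥ ∧ (p : 𝓞 K) ∈ 𝔭 then
    (absNorm h.choose).factorization p
  else 0

/-- `D_K(n)`: the number of prime ideal powers `𝔭^m` of `𝓞 K` with `N𝔭^m = n`. -/
def DK (K : Type*) [Field K] [NumberField K] (n : ℕ) : ℕ :=
  Nat.card {𝔞 : Ideal (𝓞 K) // IsPrimeIdealPower 𝔞 ∧ absNorm 𝔞 = n}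

/-- `Λ_K^*(n) = f(K/ℚ; p) · log p` if `n = p^k` is a prime power, and `0` otherwise. -/
def LambdaStarK (K : Type*) [Field K] [NumberField K] (n : ℕ) : ℝ :=
  if IsPrimePow n then (resDeg K n.minFac : ℝ) * Real.log n.minFac else 0

end

/-!
By Parseval on `(ℤ/qℤ)ˣ`, the sum of squared errors over `G_q` is at most the average of
`|ψ'_K(x, χ∘N)|²` over the characters `χ` modulo `q`: the main term `x / φ_K(q)` on `G_q` has
Fourier coefficient `x` at the `χ` that are trivial on `G_q`, and `0` elsewhere.

Passing from `χ` to `χ*` leaves the main term unchanged, because `G_q` surjects onto `G_d` for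
`d ∣ q`, so that `χ` is trivial on `G_q` exactly when `χ*` is trivial on `G_{cond χ}`. Only ideals
whose norm is not coprime to `q` are affected: these are powers of the `O(log q)` primes dividing
`q`, and the powers of each prime contribute at most `log x`. Hence the error is
`O(log q log x)`, whose square, summed over `q ≤ Q`, is `O(Q (log Qx)⁴)`.
-/

section CyclotomicCharacter

variable {R L : Type*} [CommRing R] [CommRing L] [IsDomain L] [Algebra R L]

lemma unitsMap_autToPow {d n : ℕ} [NeZero d] [NeZero n] (hdn : d ∣ n) {ζ ξ : L}
    (hζ : IsPrimitiveRoot ζ n) (hξ : IsPrimitiveRoot ξ d) (σ : L ≃ₐ[R] L) :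
    ZMod.unitsMap hdn (hζ.autToPow R σ) = hξ.autToPow R σ := by
  refine Units.ext (ZMod.val_injective d (hξ.pow_inj (ZMod.val_lt _) (ZMod.val_lt _) ?_))
  obtain ⟨i, -, rfl⟩ := hζ.eq_pow_of_pow_eq_one (hξ.pow_eq_one_iff_dvd n |>.2 hdn)
  rw [hξ.autToPow_spec R σ, ZMod.unitsMap_val, ZMod.cast_eq_val, ZMod.val_natCast, hξ.eq_orderOf,
    pow_mod_orderOf, map_pow, ← hζ.autToPow_spec R σ, pow_right_comm]

end CyclotomicCharacter

section GaloisImage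

lemma autToPow_restrictNormal {K E L : Type*} [Field K] [Field E] [Field L] [Algebra K E]
    [Algebra K L] [Algebra E L] [IsScalarTower K E L] [Normal K E] {n : ℕ} [NeZero n] {ζ : E}
    (hζ : IsPrimitiveRoot ζ n) (hζ' : IsPrimitiveRoot (algebraMap E L ζ) n) (σ : L ≃ₐ[K] L) :
    hζ.autToPow K (σ.restrictNormal E) = hζ'.autToPow K σ := by
  refine Units.ext (ZMod.val_injective n (hζ'.pow_inj (ZMod.val_lt _) (ZMod.val_lt _) ?_))
  rw [hζ'.autToPow_spec K, ← AlgEquiv.restrictNormal_commutes, ← hζ.autToPow_spec K, map_pow]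

variable {K : Type*} [Field K] [NumberField K]

lemma Gq_eq_range_autToPow {L : Type*} [Field L] [Algebra K L] [Normal K L] {q : ℕ} [NeZero q]
    {ζ : L} (hζ : IsPrimitiveRoot ζ q) : Gq K q = (hζ.autToPow K).range := by
  have hz := IsCyclotomicExtension.zeta_spec q K (CyclotomicField q K)
  have hGq : Gq K q = (hz.autToPow K).range := by
    rw [Gq, dif_pos (NeZero.pos q)]
  have : IsGalois K (CyclotomicField q K) := IsCyclotomicExtension.isGalois {q} K _
  obtain ⟨e⟩ := IsCyclotomicExtension.nonempty_algEquiv_adjoin_of_exists_isPrimitiveRoot {q} K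
    (CyclotomicField q K) L (by rintro _ rfl -; exact ⟨ζ, hζ⟩)
  let : Algebra (CyclotomicField q K) L :=
    ((IntermediateField.val _).comp e.toAlgHom).toRingHom.toAlgebra
  have : IsScalarTower K (CyclotomicField q K) L :=
    IsScalarTower.of_algebraMap_eq fun r =>
      (((IntermediateField.val _).comp e.toAlgHom).commutes r).symm
  have hz' := hz.map_of_injective (algebraMap (CyclotomicField q K) L).injective
  have hcomp : (hz.autToPow K).comp (AlgEquiv.restrictNormalHom (CyclotomicField q K)) =
      hζ.autToPow K := by
    ext σ : 1
    exact (autToPow_restrictNormal hz hz' σ).trans <|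
      (hz'.autToPow_eq_modularCyclotomicCharacter q K σ).trans
        (hζ.autToPow_eq_modularCyclotomicCharacter q K σ).symm
  rw [hGq, ← hcomp, MonoidHom.range_comp,
    MonoidHom.range_eq_top.2 (AlgEquiv.restrictNormalHom_surjective _), ← MonoidHom.range_eq_map]

lemma map_unitsMap_Gq {d q : ℕ} (hq : 0 < q) (hd : d ∣ q) :
    (Gq K q).map (ZMod.unitsMap hd) = Gq K d := by
  have : NeZero q := ⟨hq.ne'⟩
  have : NeZero d := ⟨(Nat.pos_of_dvd_of_pos hd hq).ne'⟩
  have : IsGalois K (CyclotomicField q K) := IsCyclotomicExtension.isGalois {q} K _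
  have hζ := IsCyclotomicExtension.zeta_spec q K (CyclotomicField q K)
  have hξ := hζ.pow hq (Nat.div_mul_cancel hd).symm
  rw [Gq_eq_range_autToPow hζ, Gq_eq_range_autToPow hξ, MonoidHom.map_range]
  congr 1
  ext σ : 1
  exact unitsMap_autToPow hd hζ hξ σ

end GaloisImage

section Characters

lemma sum_mulChar_subgroup {M R : Type*} [CommMonoid M] [CommRing R] [IsDomain R] (H : Subgroup Mˣ)
    [Fintype H] (χ : MulChar M R) :
    ∑ a : H, χ ((a : Mˣ) : M) = if ∀ a ∈ H, χ (a : M) = 1 then (Fintype.card H : R) else 0 := by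
  let f : H →* R := (Units.coeHom R).comp (χ.toUnitHom.comp H.subtype)
  have hf : f = 1 ↔ ∀ a ∈ H, χ (a : M) = 1 := by
    simp [f, MonoidHom.ext_iff]
  calc ∑ a : H, χ ((a : Mˣ) : M) = ∑ a : H, f a := rfl
    _ = if ∀ a ∈ H, χ (a : M) = 1 then (Fintype.card H : R) else 0 := by
      simp only [sum_hom_units, hf, Nat.cast_ite, Nat.cast_zero]

lemma sum_norm_sq_sum_char_mul {q : ℕ} [NeZero q] (f : (ZMod q)ˣ → ℂ) :
    ∑ χ : DirichletCharacter ℂ q, ‖∑ a : (ZMod q)ˣ, χ a * f a‖ ^ 2 =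
      q.totient * ∑ a : (ZMod q)ˣ, ‖f a‖ ^ 2 := by
  have hconj (χ : DirichletCharacter ℂ q) (a : (ZMod q)ˣ) :
      starRingEnd ℂ (χ a) = χ (a : ZMod q)⁻¹ := by
    rw [ZMod.inv_coe_unit, starRingEnd_apply, ← MulChar.star_apply, MulChar.star_eq_inv,
      MulChar.inv_apply, Ring.inverse_unit]
  have horth (a b : (ZMod q)ˣ) :
      ∑ χ : DirichletCharacter ℂ q, starRingEnd ℂ (χ a * f a) * (χ b * f b) =
        if a = b then q.totient * (starRingEnd ℂ (f a) * f b) else 0 := by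
    calc _ = (∑ χ : DirichletCharacter ℂ q, χ (a : ZMod q)⁻¹ * χ b) *
          (starRingEnd ℂ (f a) * f b) := by
          rw [Finset.sum_mul]
          exact Finset.sum_congr rfl fun χ _ => by rw [map_mul, hconj]; ring
      _ = _ := by
          rw [DirichletCharacter.sum_char_inv_mul_char_eq ℂ a.isUnit, ite_mul, zero_mul]
          simp only [Units.val_inj]
  apply Complex.ofReal_injective
  push_cast
  calc ∑ χ : DirichletCharacter ℂ q, (‖∑ a : (ZMod q)ˣ, χ a * f a‖ : ℂ) ^ 2
      = ∑ χ : DirichletCharacter ℂ q, ∑ a : (ZMod q)ˣ, ∑ b : (ZMod q)ˣ,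
          starRingEnd ℂ (χ a * f a) * (χ b * f b) := by
        simp only [← Complex.conj_mul', map_sum, Finset.sum_mul_sum]
    _ = ∑ a : (ZMod q)ˣ, ∑ b : (ZMod q)ˣ, ∑ χ : DirichletCharacter ℂ q,
          starRingEnd ℂ (χ a * f a) * (χ b * f b) := by
        rw [Finset.sum_comm]
        exact Finset.sum_congr rfl fun a _ => Finset.sum_comm
    _ = q.totient * ∑ a, (‖f a‖ : ℂ) ^ 2 := by
        simp only [horth, Finset.sum_ite_eq, Finset.mem_univ, if_true, Finset.mul_sum,
          Complex.conj_mul']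

lemma primitiveCharacter_unitsMap {R : Type*} [CommMonoidWithZero R] {q : ℕ}
    (χ : DirichletCharacter R q) (a : (ZMod q)ˣ) :
    χ.primitiveCharacter (ZMod.unitsMap χ.conductor_dvd_level a : (ZMod χ.conductor)ˣ) = χ a := by
  conv_rhs => rw [← χ.changeLevel_primitiveCharacter]
  rw [DirichletCharacter.changeLevel_eq_cast_of_dvd, ZMod.unitsMap_val]

lemma primitiveCharacter_trivial_on_Gq_iff {K R : Type*} [Field K] [NumberField K]
    [CommMonoidWithZero R] {q : ℕ} (hq : 0 < q) (χ : DirichletCharacter R q) :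
    (∀ a ∈ Gq K χ.conductor, χ.primitiveCharacter (a : ZMod χ.conductor) = 1) ↔
      ∀ a ∈ Gq K q, χ (a : ZMod q) = 1 := by
  rw [← map_unitsMap_Gq hq χ.conductor_dvd_level]
  simp only [Subgroup.mem_map, forall_exists_index, and_imp, forall_apply_eq_imp_iff₂,
    primitiveCharacter_unitsMap]

end Characters

section IdealNorm

lemma span_natCast_ne_bot {R : Type*} [CommRing R] [CharZero R] {q : ℕ} (hq : 0 < q) :
    span {(q : R)} ≠ ⊥ :=
  span_singleton_eq_bot.not.2 (Nat.cast_ne_zero.2 hq.ne')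

variable {S : Type*} [CommRing S] [IsDedekindDomain S] [Module.Free ℤ S]

lemma natCast_mem_of_not_coprime_absNorm {𝔭 : Ideal S} [𝔭.IsPrime] [Finite (S ⧸ 𝔭)]
    {q : ℕ} (h : ¬ (absNorm 𝔭).Coprime q) : (q : S) ∈ 𝔭 := by
  have : Fintype (S ⧸ 𝔭) := Fintype.ofFinite _
  let : Field (S ⧸ 𝔭) := Fintype.fieldOfDomain _
  obtain ⟨p, hp, hp𝔭, hpq⟩ := Nat.Prime.not_coprime_iff_dvd.1 h
  have : Fact p.Prime := ⟨hp⟩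
  have hpzero : (p : S ⧸ 𝔭) = 0 := by
    have hcard : p ∣ Fintype.card (S ⧸ 𝔭) := by
      rwa [← Nat.card_eq_fintype_card, ← Submodule.cardQuot_apply, ← absNorm_apply]
    simpa using not_isUnit_prime_of_dvd_card hcard
  have hqzero : (q : S ⧸ 𝔭) = 0 := zero_dvd_iff.1 (hpzero ▸ Nat.cast_dvd_cast hpq)
  rwa [← map_natCast (Ideal.Quotient.mk 𝔭), Ideal.Quotient.eq_zero_iff_mem] at hqzero

variable [Module.Finite ℤ S]

lemma one_lt_absNorm {I : Ideal S} (h_bot : I ≠ ⊥) (h_top : I ≠ ⊤) : 1 < absNorm I := by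
  have := absNorm_eq_zero_iff.not.2 h_bot
  have := absNorm_eq_one_iff.not.2 h_top
  omega

lemma two_pow_card_normalizedFactors_le_absNorm {I : Ideal S} (hI : I ≠ ⊥) :
    2 ^ (UniqueFactorizationMonoid.normalizedFactors I).card ≤ absNorm I := by
  conv_rhs => rw [← Ideal.prod_normalizedFactors_eq_self hI, map_multiset_prod]
  rw [← Multiset.card_map absNorm]
  refine Multiset.pow_card_le_prod fun N hN => ?_
  obtain ⟨𝔭, h𝔭, rfl⟩ := Multiset.mem_map.1 hN
  have hprime := UniqueFactorizationMonoid.prime_of_normalized_factor 𝔭 h𝔭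
  exact one_lt_absNorm hprime.ne_zero (isPrime_of_prime hprime).ne_top

lemma card_toFinset_normalizedFactors_le {I : Ideal S} (hI : I ≠ ⊥) :
    ((UniqueFactorizationMonoid.normalizedFactors I).toFinset.card : ℝ) ≤
      Real.logb 2 (absNorm I) := by
  have hN : 0 < absNorm I := Nat.pos_of_ne_zero (absNorm_eq_zero_iff.not.2 hI)
  rw [Real.le_logb_iff_rpow_le one_lt_two (by exact_mod_cast hN), Real.rpow_natCast]
  exact_mod_cast (pow_le_pow_right₀ one_le_two (Multiset.toFinset_card_le _)).trans
    (two_pow_card_normalizedFactors_le_absNorm hI)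

end IdealNorm

section VonMangoldt

variable {K : Type*} [Field K] [NumberField K]

lemma IsPrimeIdealPower.isPrime_radical {𝔞 : Ideal (𝓞 K)} (h : IsPrimeIdealPower 𝔞) :
    𝔞.radical.IsPrime := by
  obtain ⟨𝔭, m, h𝔭, -, hm, rfl⟩ := h
  rwa [Ideal.radical_pow _ (by omega), h𝔭.radical]

lemma IsPrimeIdealPower.radical_ne_bot {𝔞 : Ideal (𝓞 K)} (h : IsPrimeIdealPower 𝔞) :
    𝔞.radical ≠ ⊥ := by
  obtain ⟨𝔭, m, h𝔭, h0, hm, rfl⟩ := h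
  rwa [Ideal.radical_pow _ (by omega), h𝔭.radical]

lemma IsPrimeIdealPower.exists_eq_radical_pow {𝔞 : Ideal (𝓞 K)} (h : IsPrimeIdealPower 𝔞) :
    ∃ m, 1 ≤ m ∧ 𝔞 = 𝔞.radical ^ m := by
  obtain ⟨𝔭, m, h𝔭, -, hm, rfl⟩ := h
  exact ⟨m, hm, by rw [Ideal.radical_pow _ (by omega), h𝔭.radical]⟩

lemma LambdaK_nonneg (𝔞 : Ideal (𝓞 K)) : 0 ≤ LambdaK K 𝔞 := by
  rw [LambdaK]
  split_ifs
  · exact Real.log_natCast_nonneg _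
  · exact le_rfl

/-- The finite set of ideals of `𝓞 K` of norm at most `x`, over which all the prime ideal sums
run. The zero ideal, of norm `0`, belongs to it when `0 ≤ x`; it is harmless because
`Λ_K` vanishes there. -/
noncomputable def idealsNormLE (K : Type*) [Field K] [NumberField K] (x : ℝ) :
    Finset (Ideal (𝓞 K)) :=
  ((finite_setOfPred_absNorm_le (S := 𝓞 K) ⌊x⌋₊).subset
    fun (𝔞 : Ideal (𝓞 K)) (h : (absNorm 𝔞 : ℝ) ≤ x) => Nat.le_floor h).toFinset

@[simp]
lemma mem_idealsNormLE {x : ℝ} {𝔞 : Ideal (𝓞 K)} :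
    𝔞 ∈ idealsNormLE K x ↔ (absNorm 𝔞 : ℝ) ≤ x :=
  Set.Finite.mem_toFinset _

lemma tsum_ite_absNorm_le {E : Type*} [AddCommMonoid E] [TopologicalSpace E] (x : ℝ)
    (f : Ideal (𝓞 K) → E) :
    (∑' 𝔞 : Ideal (𝓞 K), if (absNorm 𝔞 : ℝ) ≤ x then f 𝔞 else 0) =
      ∑ 𝔞 ∈ idealsNormLE K x, f 𝔞 := by
  rw [tsum_eq_sum fun 𝔞 h => if_neg (mem_idealsNormLE.not.1 h)]
  exact Finset.sum_congr rfl fun 𝔞 h => if_pos (mem_idealsNormLE.1 h)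

lemma psiK_eq_sum (x : ℝ) (q : ℕ) (a : ZMod q) :
    psiK K x q a =
      ∑ 𝔞 ∈ idealsNormLE K x, if (absNorm 𝔞 : ZMod q) = a then LambdaK K 𝔞 else 0 := by
  simp only [psiK, ite_and, tsum_ite_absNorm_le]

lemma psiKChi_eq_sum (x : ℝ) {q : ℕ} (χ : DirichletCharacter ℂ q) :
    psiKChi K x χ = ∑ 𝔞 ∈ idealsNormLE K x, χ (absNorm 𝔞 : ZMod q) * (LambdaK K 𝔞 : ℂ) :=
  tsum_ite_absNorm_le x _

lemma card_primeIdealPowers_le {x : ℝ} (hx : 1 ≤ x) {𝔭 : Ideal (𝓞 K)} (h_bot : 𝔭 ≠ ⊥)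
    (h_top : 𝔭 ≠ ⊤) :
    (((idealsNormLE K x).filter fun 𝔞 => IsPrimeIdealPower 𝔞 ∧ 𝔞.radical = 𝔭).card : ℝ) ≤
      Real.logb (absNorm 𝔭) x := by
  have hN : (1 : ℝ) < absNorm 𝔭 := by exact_mod_cast one_lt_absNorm h_bot h_top
  have hsub : ((idealsNormLE K x).filter fun 𝔞 => IsPrimeIdealPower 𝔞 ∧ 𝔞.radical = 𝔭) ⊆
      (Finset.Icc 1 ⌊Real.logb (absNorm 𝔭) x⌋₊).image (𝔭 ^ ·) := by
    intro 𝔞 h𝔞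
    obtain ⟨hle, hpow, rfl⟩ := Finset.mem_filter.1 h𝔞
    obtain ⟨m, hm, h𝔞m⟩ := hpow.exists_eq_radical_pow
    refine Finset.mem_image.2 ⟨m, Finset.mem_Icc.2 ⟨hm, Nat.le_floor ?_⟩, h𝔞m.symm⟩
    rw [Real.le_logb_iff_rpow_le hN (by linarith), Real.rpow_natCast, ← Nat.cast_pow, ← map_pow,
      ← h𝔞m]
    exact mem_idealsNormLE.1 hle
  have hcard := (Finset.card_le_card hsub).trans Finset.card_image_le
  rw [Nat.card_Icc, Nat.add_sub_cancel] at hcard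
  exact (Nat.cast_le.2 hcard).trans (Nat.floor_le (Real.logb_nonneg hN hx))

lemma sum_LambdaK_primeIdealPowers_le {x : ℝ} (hx : 1 ≤ x) {𝔭 : Ideal (𝓞 K)} (h_bot : 𝔭 ≠ ⊥)
    (h_top : 𝔭 ≠ ⊤) :
    ∑ 𝔞 ∈ idealsNormLE K x with IsPrimeIdealPower 𝔞 ∧ 𝔞.radical = 𝔭, LambdaK K 𝔞 ≤
      Real.log x := by
  have hN : (1 : ℝ) < absNorm 𝔭 := by exact_mod_cast one_lt_absNorm h_bot h_top
  calc ∑ 𝔞 ∈ idealsNormLE K x with IsPrimeIdealPower 𝔞 ∧ 𝔞.radical = 𝔭, LambdaK K 𝔞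
      = ∑ 𝔞 ∈ idealsNormLE K x with IsPrimeIdealPower 𝔞 ∧ 𝔞.radical = 𝔭,
          Real.log (absNorm 𝔭) := by
        refine Finset.sum_congr rfl fun 𝔞 h => ?_
        obtain ⟨-, hpow, rfl⟩ := Finset.mem_filter.1 h
        exact if_pos hpow
    _ ≤ Real.logb (absNorm 𝔭) x * Real.log (absNorm 𝔭) := by
        rw [Finset.sum_const, nsmul_eq_mul]
        gcongr
        exact card_primeIdealPowers_le hx h_bot h_top
    _ = Real.log x := div_mul_cancel₀ _ (Real.log_pos hN).ne'

lemma IsPrimeIdealPower.radical_mem_normalizedFactors {𝔞 : Ideal (𝓞 K)}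
    (h : IsPrimeIdealPower 𝔞) {q : ℕ} (hq : 0 < q) (hco : ¬ (absNorm 𝔞).Coprime q) :
    𝔞.radical ∈ UniqueFactorizationMonoid.normalizedFactors (span {(q : 𝓞 K)}) := by
  have hprime := h.isPrime_radical
  have := Ideal.finiteQuotientOfFreeOfNeBot 𝔞.radical h.radical_ne_bot
  obtain ⟨m, -, h𝔞⟩ := h.exists_eq_radical_pow
  have hco_radical : ¬ (absNorm 𝔞.radical).Coprime q := fun hcop =>
    hco (by rw [h𝔞, map_pow]; exact hcop.pow_left m)
  rw [Ideal.mem_normalizedFactors_iff (span_natCast_ne_bot hq), span_singleton_le_iff_mem]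
  exact ⟨hprime, natCast_mem_of_not_coprime_absNorm hco_radical⟩

lemma card_toFinset_normalizedFactors_span_natCast_le {q : ℕ} (hq : 0 < q) :
    ((UniqueFactorizationMonoid.normalizedFactors (span {(q : 𝓞 K)})).toFinset.card : ℝ) ≤
      Module.finrank ℚ K * Real.logb 2 q := by
  rw [← Real.logb_pow, ← Nat.cast_pow, ← RingOfIntegers.rank, ← absNorm_span_natCast]
  exact card_toFinset_normalizedFactors_le (span_natCast_ne_bot hq)

lemma sum_LambdaK_not_coprime_le {x : ℝ} (hx : 1 ≤ x) {q : ℕ} (hq : 0 < q) :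
    ∑ 𝔞 ∈ idealsNormLE K x with ¬ (absNorm 𝔞).Coprime q, LambdaK K 𝔞 ≤
      Module.finrank ℚ K * Real.logb 2 q * Real.log x := by
  set P := (UniqueFactorizationMonoid.normalizedFactors (span {(q : 𝓞 K)})).toFinset
  set T := (idealsNormLE K x).filter fun 𝔞 => ¬ (absNorm 𝔞).Coprime q ∧ IsPrimeIdealPower 𝔞
    with hT
  have hradical : ∀ 𝔞 ∈ T, 𝔞.radical ∈ P := fun 𝔞 h𝔞 =>
    let ⟨_, hco, hpow⟩ := Finset.mem_filter.1 h𝔞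
    Multiset.mem_toFinset.2 (hpow.radical_mem_normalizedFactors hq hco)
  calc ∑ 𝔞 ∈ idealsNormLE K x with ¬ (absNorm 𝔞).Coprime q, LambdaK K 𝔞
      = ∑ 𝔞 ∈ T, LambdaK K 𝔞 := by
        rw [hT, ← Finset.filter_filter]
        exact (Finset.sum_filter_of_ne fun 𝔞 _ h => (ite_ne_right_iff.1 h).1).symm
    _ = ∑ 𝔭 ∈ P, ∑ 𝔞 ∈ T with 𝔞.radical = 𝔭, LambdaK K 𝔞 :=
        (Finset.sum_fiberwise_of_maps_to hradical _).symm
    _ ≤ ∑ _ ∈ P, Real.log x := by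
        refine Finset.sum_le_sum fun 𝔭 h𝔭 => ?_
        have hprime := UniqueFactorizationMonoid.prime_of_normalized_factor 𝔭
          (Multiset.mem_toFinset.1 h𝔭)
        refine le_trans ?_ (sum_LambdaK_primeIdealPowers_le hx hprime.ne_zero
          (isPrime_of_prime hprime).ne_top)
        refine Finset.sum_le_sum_of_subset_of_nonneg (fun 𝔞 h𝔞 => ?_)
          fun 𝔞 _ _ => LambdaK_nonneg 𝔞
        simp only [hT, Finset.mem_filter] at h𝔞 ⊢
        tauto
    _ ≤ Module.finrank ℚ K * Real.logb 2 q * Real.log x := by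
        rw [Finset.sum_const, nsmul_eq_mul]
        gcongr
        · exact Real.log_nonneg hx
        · exact card_toFinset_normalizedFactors_span_natCast_le hq

end VonMangoldt

section CharacterSums

variable {K : Type*} [Field K] [NumberField K]

lemma psiKChi_eq_sum_psiK (x : ℝ) {q : ℕ} [NeZero q] (χ : DirichletCharacter ℂ q) :
    psiKChi K x χ = ∑ a : (ZMod q)ˣ, χ a * (psiK K x q a : ℂ) := by
  simp only [psiKChi_eq_sum, psiK_eq_sum, Complex.ofReal_sum, Finset.mul_sum]
  rw [Finset.sum_comm]
  refine Finset.sum_congr rfl fun 𝔞 _ => ?_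
  by_cases h : IsUnit (absNorm 𝔞 : ZMod q)
  · obtain ⟨u, hu⟩ := h
    simp [← hu, Units.val_inj, apply_ite Complex.ofReal]
  · have hne (a : (ZMod q)ˣ) : (absNorm 𝔞 : ZMod q) ≠ a := fun h' => h (h' ▸ a.isUnit)
    simp [χ.map_nonunit h, hne]

/-- The error term in the prime ideal theorem for norms congruent to `a` modulo `q`. Only the
classes in `G_q` carry a main term; the other classes are kept so that the error term is defined
on the whole group `(ℤ/qℤ)ˣ`, where its Fourier coefficients are the `ψ'_K(x, χ∘N)`. -/
noncomputable def psiKError (K : Type*) [Field K] [NumberField K] (x : ℝ) (q : ℕ)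
    (a : (ZMod q)ˣ) : ℝ :=
  psiK K x q a - if a ∈ Gq K q then x / phiK K q else 0

lemma sum_char_mul_mainTerm (x : ℝ) {q : ℕ} [NeZero q] (χ : DirichletCharacter ℂ q) :
    ∑ a : (ZMod q)ˣ, χ a * ((if a ∈ Gq K q then x / phiK K q else 0 : ℝ) : ℂ) =
      if ∀ a ∈ Gq K q, χ (a : ZMod q) = 1 then (x : ℂ) else 0 := by
  have hphi : (phiK K q : ℂ) ≠ 0 := Nat.cast_ne_zero.2 (Nat.card_pos (α := Gq K q)).ne'
  calc ∑ a : (ZMod q)ˣ, χ a * ((if a ∈ Gq K q then x / phiK K q else 0 : ℝ) : ℂ)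
      = (∑ a : Gq K q, χ ((a : (ZMod q)ˣ) : ZMod q)) * (x / phiK K q) := by
        simp only [apply_ite Complex.ofReal, Complex.ofReal_div, Complex.ofReal_natCast,
          Complex.ofReal_zero, mul_ite, mul_zero]
        rw [← Finset.sum_filter, Finset.sum_mul]
        exact Finset.sum_subtype _ (by simp) _
    _ = if ∀ a ∈ Gq K q, χ (a : ZMod q) = 1 then (x : ℂ) else 0 := by
        rw [sum_mulChar_subgroup, ← Nat.card_eq_fintype_card, ← phiK]
        split_ifs
        · exact mul_div_cancel₀ _ hphi
        · exact zero_mul _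

lemma psiKChi'_eq_sum_char_mul_psiKError (x : ℝ) {q : ℕ} [NeZero q]
    (χ : DirichletCharacter ℂ q) :
    psiKChi' K x χ = ∑ a : (ZMod q)ˣ, χ a * (psiKError K x q a : ℂ) := by
  simp only [psiKError, Complex.ofReal_sub, mul_sub, Finset.sum_sub_distrib,
    sum_char_mul_mainTerm, psiKChi', psiKChi_eq_sum_psiK]
  split_ifs
  · rfl
  · exact (sub_zero _).symm

lemma finsum_sq_le_sum_norm_sq_psiKChi' (x : ℝ) {q : ℕ} [NeZero q] :
    ∑ᶠ a ∈ Gq K q, (psiK K x q (a : ZMod q) - x / phiK K q) ^ 2 ≤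
      (1 / q.totient : ℝ) * ∑ χ : DirichletCharacter ℂ q, ‖psiKChi' K x χ‖ ^ 2 := by
  have hφ : (q.totient : ℝ) ≠ 0 := Nat.cast_ne_zero.2 (Nat.totient_pos.2 (NeZero.pos q)).ne'
  calc ∑ᶠ a ∈ Gq K q, (psiK K x q (a : ZMod q) - x / phiK K q) ^ 2
      ≤ ∑ a : (ZMod q)ˣ, psiKError K x q a ^ 2 := by
        rw [finsum_eq_sum_of_fintype]
        refine Finset.sum_le_sum fun a _ => ?_
        by_cases h : a ∈ Gq K q
        · simp [psiKError, h]
        · simp [h, sq_nonneg]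
    _ = (1 / q.totient : ℝ) * ∑ χ : DirichletCharacter ℂ q, ‖psiKChi' K x χ‖ ^ 2 := by
        simp only [psiKChi'_eq_sum_char_mul_psiKError, sum_norm_sq_sum_char_mul,
          Complex.norm_real, Real.norm_eq_abs, sq_abs]
        rw [← mul_assoc, one_div_mul_cancel hφ, one_mul]

end CharacterSums

section PrimitiveCharacter

variable {K : Type*} [Field K] [NumberField K]

lemma psiKChi'_primitiveCharacter_sub (x : ℝ) {q : ℕ} (hq : 0 < q)
    (χ : DirichletCharacter ℂ q) :
    psiKChi' K x χ.primitiveCharacter - psiKChi' K x χ =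
      psiKChi K x χ.primitiveCharacter - psiKChi K x χ := by
  simp only [psiKChi', primitiveCharacter_trivial_on_Gq_iff hq]
  split_ifs
  · exact sub_sub_sub_cancel_right _ _ _
  · rfl

lemma norm_primitiveCharacter_natCast_sub_le {q : ℕ} (χ : DirichletCharacter ℂ q) (n : ℕ) :
    ‖χ.primitiveCharacter n - χ n‖ ≤ if n.Coprime q then 0 else 1 := by
  split_ifs with h
  · have heq := χ.primitiveCharacter_apply_of_isCoprime (Nat.isCoprime_iff_coprime.2 h)
    rw [Int.cast_natCast, Int.cast_natCast] at heq
    rw [heq, sub_self, norm_zero]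
  · rw [χ.map_nonunit fun hu => h ((ZMod.isUnit_iff_coprime _ _).1 hu), sub_zero]
    exact DirichletCharacter.norm_le_one _ _

lemma norm_psiKChi'_primitiveCharacter_sub_le {x : ℝ} (hx : 1 ≤ x) {q : ℕ} (hq : 0 < q)
    (χ : DirichletCharacter ℂ q) :
    ‖psiKChi' K x χ.primitiveCharacter - psiKChi' K x χ‖ ≤
      Module.finrank ℚ K * Real.logb 2 q * Real.log x := by
  refine le_trans ?_ (sum_LambdaK_not_coprime_le (K := K) hx hq)
  rw [psiKChi'_primitiveCharacter_sub x hq, psiKChi_eq_sum, psiKChi_eq_sum,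
    ← Finset.sum_sub_distrib, Finset.sum_filter]
  refine (norm_sum_le _ _).trans (Finset.sum_le_sum fun 𝔞 _ => ?_)
  rw [← sub_mul, norm_mul, Complex.norm_real, Real.norm_of_nonneg (LambdaK_nonneg 𝔞), ite_not]
  refine (mul_le_mul_of_nonneg_right (norm_primitiveCharacter_natCast_sub_le χ _)
    (LambdaK_nonneg 𝔞)).trans_eq ?_
  rw [ite_mul, zero_mul, one_mul]

lemma norm_sq_psiKChi'_le {x : ℝ} (hx : 1 ≤ x) {q : ℕ} (hq : 0 < q)
    (χ : DirichletCharacter ℂ q) :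
    ‖psiKChi' K x χ‖ ^ 2 ≤ 2 * ((Module.finrank ℚ K * Real.logb 2 q * Real.log x) ^ 2 +
      ‖psiKChi' K x χ.primitiveCharacter‖ ^ 2) := by
  have hsub := norm_psiKChi'_primitiveCharacter_sub_le (K := K) hx hq χ
  have htri := norm_le_norm_add_norm_sub (psiKChi' K x χ.primitiveCharacter) (psiKChi' K x χ)
  calc ‖psiKChi' K x χ‖ ^ 2
      ≤ (Module.finrank ℚ K * Real.logb 2 q * Real.log x +
          ‖psiKChi' K x χ.primitiveCharacter‖) ^ 2 := by gcongr; linarith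
    _ ≤ _ := add_sq_le

lemma finsum_sq_le_finsum_norm_sq_primitiveCharacter {x : ℝ} (hx : 1 ≤ x) {q : ℕ}
    (hq : 0 < q) :
    ∑ᶠ a ∈ Gq K q, (psiK K x q (a : ZMod q) - x / phiK K q) ^ 2 ≤
      2 * ((Module.finrank ℚ K * Real.logb 2 q * Real.log x) ^ 2 + (1 / q.totient : ℝ) *
        ∑ᶠ χ : DirichletCharacter ℂ q, ‖psiKChi' K x χ.primitiveCharacter‖ ^ 2) := by
  have : NeZero q := ⟨hq.ne'⟩
  have hφ : (q.totient : ℝ) ≠ 0 := Nat.cast_ne_zero.2 (Nat.totient_pos.2 hq).ne'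
  have hcard : Fintype.card (DirichletCharacter ℂ q) = q.totient := by
    rw [← Nat.card_eq_fintype_card, DirichletCharacter.card_eq_totient_of_hasEnoughRootsOfUnity]
  calc ∑ᶠ a ∈ Gq K q, (psiK K x q (a : ZMod q) - x / phiK K q) ^ 2
      ≤ (1 / q.totient : ℝ) * ∑ χ : DirichletCharacter ℂ q, ‖psiKChi' K x χ‖ ^ 2 :=
        finsum_sq_le_sum_norm_sq_psiKChi' x
    _ ≤ (1 / q.totient : ℝ) * ∑ χ : DirichletCharacter ℂ q,
          2 * ((Module.finrank ℚ K * Real.logb 2 q * Real.log x) ^ 2 +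
            ‖psiKChi' K x χ.primitiveCharacter‖ ^ 2) := by
        gcongr with χ
        exact norm_sq_psiKChi'_le hx hq χ
    _ = _ := by
        rw [← Finset.mul_sum, Finset.sum_add_distrib, Finset.sum_const, Finset.card_univ, hcard,
          nsmul_eq_mul, finsum_eq_sum_of_fintype]
        field_simp

end PrimitiveCharacter

lemma logb_two_mul_log_sq_le {x Q q : ℝ} (hx : 1 ≤ x) (hq : 1 ≤ q) (hqQ : q ≤ Q) (n : ℝ) :
    (n * Real.logb 2 q * Real.log x) ^ 2 ≤
      (n / Real.log 2) ^ 2 * Real.log (Q * x) ^ 4 := by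
  have hlogq : Real.log q ≤ Real.log (Q * x) := Real.log_le_log (by linarith) (by nlinarith)
  have hlogx : Real.log x ≤ Real.log (Q * x) := Real.log_le_log (by linarith) (by nlinarith)
  have hlogq0 := Real.log_nonneg hq
  have hlogx0 := Real.log_nonneg hx
  calc (n * Real.logb 2 q * Real.log x) ^ 2
      = (n / Real.log 2) ^ 2 * (Real.log q ^ 2 * Real.log x ^ 2) := by rw [Real.logb]; ring
    _ ≤ (n / Real.log 2) ^ 2 * (Real.log (Q * x) ^ 2 * Real.log (Q * x) ^ 2) := by gcongr
    _ = (n / Real.log 2) ^ 2 * Real.log (Q * x) ^ 4 := by ring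

theorem error_sum_le_primitive_char_sum_general (K : Type*) [Field K] [NumberField K] :
    ∃ C : ℝ, 0 < C ∧ ∀ x Q : ℝ, 1 ≤ x → 1 ≤ Q →
      ∑ q ∈ Finset.Icc 1 ⌊Q⌋₊, ∑ᶠ a ∈ Gq K q,
          (psiK K x q (a : ZMod q) - x / phiK K q) ^ 2 ≤
        C * (Q * Real.log (Q * x) ^ 4 +
          ∑ q ∈ Finset.Icc 1 ⌊Q⌋₊, (1 / q.totient : ℝ) *
            ∑ᶠ χ : DirichletCharacter ℂ q, ‖psiKChi' K x χ.primitiveCharacter‖ ^ 2) := by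
  set c : ℝ := (Module.finrank ℚ K / Real.log 2) ^ 2
  refine ⟨2 * (c + 1), by positivity, fun x Q hx hQ => ?_⟩
  set T : ℕ → ℝ := fun q => (1 / q.totient : ℝ) *
    ∑ᶠ χ : DirichletCharacter ℂ q, ‖psiKChi' K x χ.primitiveCharacter‖ ^ 2
  have hT : 0 ≤ ∑ q ∈ Finset.Icc 1 ⌊Q⌋₊, T q := Finset.sum_nonneg fun q _ =>
    mul_nonneg (by positivity) (finsum_nonneg fun χ => by positivity)
  calc _ ≤ ∑ q ∈ Finset.Icc 1 ⌊Q⌋₊, 2 * (c * Real.log (Q * x) ^ 4 + T q) := by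
        refine Finset.sum_le_sum fun q hq => ?_
        obtain ⟨hq1, hqQ⟩ := Finset.mem_Icc.1 hq
        refine (finsum_sq_le_finsum_norm_sq_primitiveCharacter hx hq1).trans ?_
        gcongr
        exact logb_two_mul_log_sq_le hx (Nat.one_le_cast.2 hq1)
          ((Nat.le_floor_iff (by linarith)).1 hqQ) _
    _ = 2 * (⌊Q⌋₊ * (c * Real.log (Q * x) ^ 4) + ∑ q ∈ Finset.Icc 1 ⌊Q⌋₊, T q) := by
        simp [← Finset.mul_sum, Finset.sum_add_distrib]
    _ ≤ 2 * (Q * (c * Real.log (Q * x) ^ 4) + ∑ q ∈ Finset.Icc 1 ⌊Q⌋₊, T q) := by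
        gcongr
        exact Nat.floor_le (by linarith)
    _ ≤ 2 * (c + 1) * (Q * Real.log (Q * x) ^ 4 + ∑ q ∈ Finset.Icc 1 ⌊Q⌋₊, T q) := by
        have hlog : 0 ≤ Q * Real.log (Q * x) ^ 4 := by positivity
        have hcT : 0 ≤ c * ∑ q ∈ Finset.Icc 1 ⌊Q⌋₊, T q := by positivity
        linarith

/-- Reduction to primitive characters: for `x ≥ 2` and `Q ≥ 1`,
`∑_{q ≤ Q} ∑_{a ∈ G_q} (ψ_K(x;q,a) − x/φ_K(q))²
  ≪ Q (log Qx)⁴ + ∑_{q ≤ Q} (1/φ(q)) ∑_{χ mod q} |ψ'_K(x, χ*∘N)|²`,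
where `χ*` is the primitive character inducing `χ`, the implied constant depending
only on `K`. -/
theorem error_sum_le_primitive_char_sum (K : Type*) [Field K] [NumberField K]
    [IsGalois ℚ K] :
    ∃ C : ℝ, 0 < C ∧ ∀ x Q : ℝ, 2 ≤ x → 1 ≤ Q →
      ∑ q ∈ Finset.Icc 1 ⌊Q⌋₊, ∑ᶠ a ∈ Gq K q,
          (psiK K x q (a : ZMod q) - x / phiK K q) ^ 2 ≤
        C * (Q * Real.log (Q * x) ^ 4 +
          ∑ q ∈ Finset.Icc 1 ⌊Q⌋₊, (1 / q.totient : ℝ) *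
            ∑ᶠ χ : DirichletCharacter ℂ q, ‖psiKChi' K x χ.primitiveCharacter‖ ^ 2) := by
  obtain ⟨C, hC, h⟩ := error_sum_le_primitive_char_sum_general K
  exact ⟨C, hC, fun x Q hx hQ => h x Q (one_le_two.trans hx) hQ⟩
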